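/- Let c be a Coxeter element of G4 and let k ≥ 2. Two reflection factorizations (t₁,…,t_k) and (t′₁,…,t′_k) of c lie in the same Hurwitz orbit if and only if they have the same multiset of conjugacy classes. -/

import Mathlib

noncomputable section

open Matrix Complex

/-- The `i`-th Hurwitz move on length-`k` tuples of group elements. -/
def IsHurwitzMove {G : Type*} [Group G] {k : ℕ} (t t' : Fin k → G) : Prop :=
  ∃ i : ℕ, ∃ h : i + 1 < k,
    t' ⟨i, Nat.lt_of_succ_lt h⟩ = t ⟨i + 1, h⟩ ∧
    t' ⟨i + 1, h⟩ = (t ⟨i + 1, h⟩)⁻¹ * t ⟨i, Nat.lt_of_succ_lt h⟩ * t ⟨i + 1, h⟩ ∧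
    ∀ j : Fin k, (j : ℕ) ≠ i → (j : ℕ) ≠ i + 1 → t' j = t j

/-- Two tuples lie in the same Hurwitz orbit. -/
def SameHurwitzOrbit {G : Type*} [Group G] {k : ℕ} (t t' : Fin k → G) : Prop :=
  Relation.EqvGen IsHurwitzMove t t'

/-- A group element `r` appears (as an entry) in the Hurwitz orbit of the tuple `t`. -/
def Appears {G : Type*} [Group G] {k : ℕ} (r : G) (t : Fin k → G) : Prop :=
  ∃ s : Fin k → G, SameHurwitzOrbit t s ∧ ∃ j, s j = r

/-- A tuple has two consecutive equal entries. -/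
def HasConsecutiveEqualPair {G : Type*} [Group G] {k : ℕ} (t : Fin k → G) : Prop :=
  ∃ i : ℕ, ∃ h : i + 1 < k, t ⟨i, Nat.lt_of_succ_lt h⟩ = t ⟨i + 1, h⟩

/-- Replace the `p`-th entry of a tuple by two consecutive copies of its square. -/
def doubleAt {G : Type*} [Group G] {m : ℕ} (t : Fin m → G) (p : Fin m) : Fin (m + 1) → G :=
  fun j =>
    if h1 : (j : ℕ) < (p : ℕ) then t ⟨j, h1.trans p.isLt⟩
    else if h2 : (j : ℕ) ≤ (p : ℕ) + 1 then (t p) ^ 2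
    else t ⟨(j : ℕ) - 1, by have := j.isLt; omega⟩

/-- `ω = e^(2πi/3)`. -/
def ω : ℂ := Complex.exp (2 * Real.pi * Complex.I / 3)

def AMat : Matrix (Fin 2) (Fin 2) ℂ := !![1, 0; 0, ω]

def BMat : Matrix (Fin 2) (Fin 2) ℂ :=
  !![(ω - ω ^ 2) / 3, ω ^ 2; (-2 * ω ^ 2) / 3, (-ω - 2 * ω ^ 2) / 3]

/-- The complex reflection group G₄ as the subgroup of GL(2,ℂ) generated by `AMat`, `BMat`. -/
def G4 : Subgroup (GL (Fin 2) ℂ) :=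
  Subgroup.closure {g : GL (Fin 2) ℂ |
    (g : Matrix (Fin 2) (Fin 2) ℂ) = AMat ∨ (g : Matrix (Fin 2) (Fin 2) ℂ) = BMat}

/-- The matrix underlying an element of G₄. -/
def mat (t : G4) : Matrix (Fin 2) (Fin 2) ℂ := ((t : GL (Fin 2) ℂ) : Matrix (Fin 2) (Fin 2) ℂ)

/-- A reflection in G₄: a non-identity element with eigenvalue 1. -/
def IsReflection (t : G4) : Prop := t ≠ 1 ∧ (mat t - 1).det = 0

/-- The conjugacy class R₁ of reflections of determinant ω. -/
def R1 : Set G4 := {t | IsReflection t ∧ (mat t).det = ω}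

/-- The conjugacy class R₂ of reflections of determinant ω². -/
def R2 : Set G4 := {t | IsReflection t ∧ (mat t).det = ω ^ 2}

/-- A Coxeter element of G₄: an element with a primitive 6th root of unity as eigenvalue. -/
def IsCoxeter (c : G4) : Prop :=
  ∃ ζ : ℂ, IsPrimitiveRoot ζ 6 ∧ (mat c - ζ • (1 : Matrix (Fin 2) (Fin 2) ℂ)).det = 0

/-- The relators of G₅: a³, b³, abab(baba)⁻¹. -/
def g5Rels : Set (FreeGroup (Fin 2)) :=
  {FreeGroup.of 0 ^ 3, FreeGroup.of 1 ^ 3,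
    FreeGroup.of 0 * FreeGroup.of 1 * FreeGroup.of 0 * FreeGroup.of 1 *
      (FreeGroup.of 1 * FreeGroup.of 0 * FreeGroup.of 1 * FreeGroup.of 0)⁻¹}

/-- The complex reflection group G₅, by its presentation ⟨a,b | a³ = b³ = 1, abab = baba⟩. -/
abbrev G5 := PresentedGroup g5Rels

def ga : G5 := PresentedGroup.of 0
def gb : G5 := PresentedGroup.of 1

/-- The conjugacy class of `a` in G₅. -/
def S1 : Set G5 := {t | IsConj ga t}
/-- The conjugacy class of `b` in G₅. -/
def S2 : Set G5 := {t | IsConj gb t}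
/-- The conjugacy class of `a²` in G₅. -/
def S3 : Set G5 := {t | IsConj (ga ^ 2) t}
/-- The conjugacy class of `b²` in G₅. -/
def S4 : Set G5 := {t | IsConj (gb ^ 2) t}

/-- A reflection in G₅: a conjugate of a, b, a², or b². -/
def IsReflection5 (t : G5) : Prop := t ∈ S1 ∨ t ∈ S2 ∨ t ∈ S3 ∨ t ∈ S4

/-- A Coxeter element of G₅: an element of order 12. -/
def IsCoxeter5 (c : G5) : Prop := orderOf c = 12


/-! ### A finite model of `G4` -/

def mTab : ℕ := 644040642531045029978348836210691779279402375473178957471098133067227487733672281508686378141718732405238046751154809369272688997513368212017770954582954137099251180287763462964236899719095329335139942879035996911776760974924722125285966507512473851403045912141657520743336183724299617934819008807292732234303695762984771995720042835604359712482434918585729301837171232599028436942980166806388278604136742220802251091527258725519595586634546489273966577407634210822158199817170545297192002703758913173718016753461285565394191956152158346945626507290289674078193912827462549017914191805393009312579357365689742996850167614362653654136007135932396816133323947112974930819229876909919946892140632852098182208608887532756703005641130267128090077450384820622536963187961368348470775624993183029051477699496497442901155132552719335423470236670607273190078297978246912903200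

def mInvTab : ℕ := 361453315664378134628088578290260064

def mMatTab : ℕ := 171813566399814268558136971565303655730777825945595470764723982780701133828704581699943802848290130484837411909878919594476828568620521841924906987691907063522204296096102110

def reps2N : List (List ℕ) :=
  [[1, 2], [1, 6], [1, 12], [1, 14], [1, 19], [1, 21], [2, 3], [2, 12], [2, 21], [3, 6], [3, 12],
  [3, 19], [3, 21], [6, 21]]

def reps3N : List (List ℕ) :=
  [[1, 1, 2], [1, 1, 6], [1, 1, 12], [1, 1, 14], [1, 1, 19], [1, 1, 21], [1, 2, 2], [1, 2, 3], [1,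
  2, 6], [1, 2, 12], [1, 2, 21], [1, 3, 6], [1, 3, 12], [1, 3, 19], [1, 3, 21], [1, 6, 6], [1, 6,
  21], [1, 12, 12], [1, 14, 14], [1, 19, 19], [1, 21, 21], [2, 2, 21], [2, 3, 21], [3, 3, 6], [3,
  3, 19], [3, 3, 21], [3, 6, 6], [3, 6, 21], [3, 19, 19], [3, 21, 21]]

def reps4N : List (List ℕ) :=
  [[1, 1, 1, 2], [1, 1, 1, 6], [1, 1, 1, 12], [1, 1, 1, 14], [1, 1, 1, 19], [1, 1, 1, 21], [1, 1,
  2, 2], [1, 1, 2, 3], [1, 1, 2, 6], [1, 1, 2, 12], [1, 1, 2, 21], [1, 1, 3, 6], [1, 1, 3, 12],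
  [1, 1, 3, 19], [1, 1, 3, 21], [1, 1, 6, 6], [1, 1, 6, 21], [1, 1, 12, 12], [1, 1, 14, 14], [1,
  1, 19, 19], [1, 1, 21, 21], [1, 2, 2, 2], [1, 2, 2, 21], [1, 2, 3, 21], [1, 3, 3, 6], [1, 3, 3,
  19], [1, 3, 3, 21], [1, 3, 6, 6], [1, 3, 6, 21], [1, 3, 19, 19], [1, 3, 21, 21], [1, 6, 6, 6],
  [3, 3, 3, 6], [3, 3, 3, 19], [3, 3, 3, 21], [3, 3, 6, 6], [3, 3, 6, 21], [3, 3, 19, 19], [3, 3,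
  21, 21], [3, 6, 6, 6]]

def paths2 : List ℕ :=
  [0, 0, 0, 0, 0, 0, 0, 0, 0, 0, 0, 0, 0, 0, 221, 2221, 1, 221, 1122, 221, 221122, 1122, 0, 1221,
  11222, 112, 0, 221122, 21, 1, 1, 2221, 1, 1, 11221, 2221, 12211, 0, 122112, 0, 0, 0, 21, 21,
  21112, 2221, 1, 221, 21, 221112, 211122, 221, 1112, 221, 1, 1122, 21, 221, 221, 1, 221, 2112,
  2211, 11, 2211, 2211, 22211, 1221, 112, 22112, 1, 1, 1, 221, 221, 1, 221, 112, 21122, 112,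
  22112, 112, 1221, 2211, 2221, 221, 2221, 112111, 221, 1, 11122, 112221, 1, 1, 12221, 221, 1,
  112, 21, 1, 2221, 221, 221, 1, 2111, 222111, 111, 21, 122211, 1, 221, 11]

def paths3 : List ℕ :=
  [0, 0, 0, 0, 0, 0, 0, 0, 0, 0, 0, 0, 0, 0, 0, 0, 0, 0, 0, 0, 0, 0, 0, 0, 0, 0, 0, 0, 0, 0, 321,
  3321, 3321, 21, 3321, 32231, 33221, 33221, 333221, 221, 33221, 33221, 333221, 23321, 2231,
  23321, 332231, 112332, 23321, 32231122, 221, 321123321123, 221122, 12231, 12231223, 123321,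
  31221, 331221, 123321, 3122312211, 321, 21, 21, 33321, 21, 21, 3223321, 223321, 3321, 33321,
  233221, 1, 2332231, 1, 1, 1, 1, 3223321, 3223321, 1, 1, 211221, 122311, 0, 0, 0, 0, 0, 0, 0,
  33321, 3321, 33321, 2232221, 3321, 21, 321, 222331, 233221, 2233321, 21, 21, 233321, 3321, 21,
  23321, 2231, 3223112111, 3332221, 111223322, 33221, 21123321, 312231122, 321, 21, 3321, 33221,
  221, 23321, 112332, 21, 21, 21, 3321, 3321, 21, 23321, 3321, 32231, 2231, 322331, 2231, 332231,
  2231, 23321, 3221, 33221, 33221, 122312, 23321, 32231122, 332211, 22311, 123321, 12231, 1123,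
  3122312211, 33122331, 331221, 123321, 3321, 33321, 21, 3321, 22331, 3321, 1, 3322331, 21123322,
  22331, 1, 23321, 223331, 2231, 1, 32231122, 3322331, 23321, 33221, 33221, 23321, 32231221,
  22311223, 112211, 123321, 12231, 123321, 3312231, 3122312211, 1221, 321, 21, 33321, 3321, 3321,
  21, 3332221, 32221, 332221, 3332221, 2221, 321, 2333221, 21, 3321, 33221, 221, 3332221,
  223112111, 23321, 1233211, 2312231221, 1233211, 3321, 3321, 21, 1, 22331, 33221, 23321, 321,
  321, 322231, 33321, 21, 3321, 233321112, 321, 322321112, 3322231, 3222331, 3321, 22231, 3321,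
  21, 1, 22331, 3332221, 3223321, 33221, 23321, 222111, 332111, 21, 3321, 21, 23321, 2231, 122312,
  33221]

def paths4 : List ℕ :=
  [0, 0, 0, 0, 0, 0, 0, 0, 0, 0, 0, 0, 0, 0, 0, 0, 0, 0, 0, 0, 0, 0, 0, 0, 0, 0, 0, 0, 0, 0, 0, 0,
  0, 0, 0, 0, 0, 0, 0, 0, 1, 1, 1, 1, 1, 1, 1, 1, 1, 1, 1, 1, 1, 1, 1, 1, 1, 1, 1, 1, 1, 1, 1, 1,
  1, 1, 1, 1, 1, 1, 1, 1, 112211, 112211, 112211, 12231, 12231, 1123, 112211, 1221, 1, 1, 1, 1, 1,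
  1, 1, 1, 1, 1, 1, 1, 1, 1, 1, 1, 1, 1, 1, 1, 1, 1, 1, 1, 1, 1, 1, 1, 1, 1, 1, 1, 0, 0, 0, 0, 0,
  0, 0, 0, 1, 1, 1, 1, 1, 1, 1, 1, 1, 1, 1, 1, 1, 1, 1, 1, 1, 1, 1, 1, 1, 1, 1, 1, 1, 1, 1, 1, 1,
  1, 1, 1, 1, 1, 1, 1, 1, 1, 1, 1, 1, 1, 1, 1, 1, 1, 1, 1, 1, 1, 1, 1, 1, 1, 1, 1, 1, 1, 1, 1, 1,
  1, 1, 1, 1, 1, 1, 1, 1, 1, 1, 1, 112211, 112211, 112211, 112211, 11234, 12231, 1123, 122312, 1,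
  1, 1, 1, 1, 1, 1, 1, 1, 1, 1, 1, 1, 1, 1, 1, 1, 1, 1, 1, 1, 122312, 1, 1, 1, 1, 1, 1, 1, 1, 1,
  112, 112211, 112211, 112211, 1123, 1123, 112211, 12231, 112, 1, 1, 1, 1, 1, 1, 1, 1, 1, 1, 1, 1,
  1, 1, 1, 1, 1, 1, 1, 1, 1, 1, 1, 1, 1, 1, 1, 1, 1, 1, 1, 1, 1, 1, 1, 1, 1, 1, 1, 122312, 1, 1,
  1, 1, 1, 1, 1, 1, 1, 1, 1, 1, 1, 1, 1, 1, 1, 1, 1, 1, 1, 1112, 1, 1, 1, 1, 1, 1, 1, 1, 1,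
  1233211, 1, 1, 1, 1, 1, 1, 1, 1]

/-- The finite model, a group of order 24. -/
def M4 : Type := Fin 24

instance : DecidableEq M4 := inferInstanceAs (DecidableEq (Fin 24))
instance : Fintype M4 := inferInstanceAs (Fintype (Fin 24))

def mk4 (n : ℕ) : M4 := (⟨n % 24, Nat.mod_lt _ (by decide)⟩ : Fin 24)
def val4 (a : M4) : ℕ := Fin.val (n := 24) a

def mul4 (a b : M4) : M4 := mk4 ((mTab >>> (5 * (24 * val4 a + val4 b))) % 32)
def inv4 (a : M4) : M4 := mk4 ((mInvTab >>> (5 * val4 a)) % 32)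

instance : Mul M4 := ⟨mul4⟩
instance : One M4 := ⟨mk4 0⟩
instance : Inv M4 := ⟨inv4⟩

theorem forall4 (p : M4 → Prop) (h : ∀ i : Fin 24, p i) : ∀ a, p a := h

set_option maxRecDepth 100000 in
instance : Group M4 :=
  Group.ofLeftAxioms (by decide +kernel) (by decide +kernel) (by decide +kernel)

def refl4 : List M4 := [1, 2, 3, 6, 12, 14, 19, 21].map mk4
def cls4 : List M4 := [1, 2, 12, 14].map mk4
def s4 : M4 := mk4 1
def b4 : M4 := mk4 2
def z4 : M4 := mk4 22

def n14 (l : List M4) : ℕ := l.countP (fun x => decide (x ∈ cls4))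

theorem cls_conj : ∀ a b : M4, (b⁻¹ * a * b ∈ cls4 ↔ a ∈ cls4) := by decide +kernel
theorem refl_conj : ∀ a b : M4, (b⁻¹ * a * b ∈ refl4 ↔ a ∈ refl4) := by decide +kernel
theorem refl_comm_trans : ∀ a ∈ refl4, ∀ b ∈ refl4, ∀ c ∈ refl4,
    a * b = b * a → b * c = c * b → a * c = c * a := by decide +kernel
theorem refl_shift : ∀ a ∈ refl4, ∀ b ∈ refl4, ∀ c ∈ refl4,
    b * c = c * b → a * c ≠ c * a → (b⁻¹ * a * b) * c ≠ c * (b⁻¹ * a * b) := by decide +kernel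
theorem refl_comm : ∀ a ∈ refl4, ∀ b ∈ refl4, a * b = b * a → b = a ∨ b = a⁻¹ := by
  decide +kernel
theorem refl_cube : ∀ a ∈ refl4, a * a = a⁻¹ ∧ a⁻¹ * a⁻¹ = a ∧ a * a * a = 1 ∧
  a⁻¹ * a⁻¹ * a⁻¹ = 1 := by decide +kernel
theorem not_refl : ∀ a : M4, a ∈ refl4 ∨ a = 1 ∨ a * a = z4 ∨ a * a * a = z4 := by
  decide +kernel
theorem ker4 : ∀ a : M4, a = 1 ∨ a = z4 ∨
    ∃ g, (a * (g * a * g⁻¹)) * (a * (g * a * g⁻¹)) * (a * (g * a * g⁻¹)) = z4 := by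
  decide +kernel

/-! ### List Hurwitz equivalence -/

inductive LE4 {G : Type*} [Group G] : List G → List G → Prop
  | rfl' (l) : LE4 l l
  | symm' {l l'} : LE4 l l' → LE4 l' l
  | trans' {l l' l''} : LE4 l l' → LE4 l' l'' → LE4 l l''
  | swap (a b l) : LE4 (a :: b :: l) (b :: (b⁻¹ * a * b) :: l)
  | cons' (x) {l l'} : LE4 l l' → LE4 (x :: l) (x :: l')

theorem LE4.prod {G : Type*} [Group G] {l l' : List G} (h : LE4 l l') : l.prod = l'.prod := by
  induction h with
  | rfl' => rfl
  | symm' _ ih => exact ih.symm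
  | trans' _ _ ih1 ih2 => exact ih1.trans ih2
  | swap a b l => simp [mul_assoc]
  | cons' x _ ih => simp [ih]

theorem LE4.length {G : Type*} [Group G] {l l' : List G} (h : LE4 l l') :
    l.length = l'.length := by
  induction h with
  | rfl' => rfl
  | symm' _ ih => exact ih.symm
  | trans' _ _ ih1 ih2 => exact ih1.trans ih2
  | swap a b l => simp
  | cons' x _ ih => simp [ih]

theorem LE4.n1 {l l' : List M4} (h : LE4 l l') : n14 l = n14 l' := by
  induction h with
  | rfl' => rfl
  | symm' _ ih => exact ih.symm
  | trans' _ _ ih1 ih2 => exact ih1.trans ih2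
  | swap a b l => simp only [n14, List.countP_cons, cls_conj]; omega
  | cons' x _ ih => simp only [n14, List.countP_cons] at *; omega

def move4 : ℕ → List M4 → List M4
  | 0, a :: b :: l => b :: (b⁻¹ * a * b) :: l
  | n + 1, a :: l => a :: move4 n l
  | _, l => l

theorem move4_le : ∀ (n : ℕ) (l : List M4), LE4 l (move4 n l)
  | 0, [] => .rfl' _
  | 0, [_] => .rfl' _
  | 0, a :: b :: l => .swap a b l
  | _ + 1, [] => .rfl' _
  | n + 1, a :: l => .cons' a (move4_le n l)

def run4 : ℕ → ℕ → List M4 → List M4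
  | 0, _, l => l
  | f + 1, p, l => if p = 0 then l else run4 f (p / 10) (move4 (p % 10 - 1) l)

theorem run4_le : ∀ (f p : ℕ) (l : List M4), LE4 l (run4 f p l)
  | 0, _, l => .rfl' _
  | f + 1, p, l => by
    unfold run4
    split
    · exact .rfl' _
    · exact .trans' (move4_le _ _) (run4_le _ _ _)

def chk4 (tgt : List M4 → Bool) : List (List M4) → List ℕ → Bool
  | [], _ => true
  | c :: cs, p :: ps => tgt (run4 14 p c) && chk4 tgt cs ps
  | _ :: _, [] => false

theorem chk4_spec (tgt : List M4 → Bool) : ∀ cs ps, chk4 tgt cs ps = true →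
    ∀ c ∈ cs, ∃ l, LE4 c l ∧ tgt l = true
  | [], _, _, c, hc => by simp at hc
  | _ :: _, [], h, _, _ => by simp [chk4] at h
  | c :: cs, p :: ps, h, d, hd => by
    simp only [chk4, Bool.and_eq_true] at h
    rcases List.mem_cons.1 hd with rfl | hd
    · exact ⟨_, run4_le _ _ _, h.1⟩
    · exact chk4_spec tgt cs ps h.2 d hd

def reps2 : List (List M4) := reps2N.map (List.map mk4)
def reps3 : List (List M4) := reps3N.map (List.map mk4)
def reps4 : List (List M4) := reps4N.map (List.map mk4)

def cases4 (R : List (List M4)) : List (List M4) := refl4.flatMap fun x => R.map (x :: ·)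

def Gen4 (l : List M4) : Prop := ∃ x ∈ l, ∃ y ∈ l, x * y ≠ y * x
instance (l : List M4) : Decidable (Gen4 l) := by unfold Gen4; infer_instance

def Good4 (l : List M4) : Prop := (∀ x ∈ l, x ∈ refl4) ∧ Gen4 l
instance (l : List M4) : Decidable (Good4 l) := by unfold Good4; infer_instance

def tgt5 : List M4 → Bool
  | [] => false
  | h :: t => decide (h = if n14 (h :: t) = 0 then s4⁻¹ else s4) && decide (Good4 t)

theorem chk_2 : ∀ a ∈ refl4, ∀ b ∈ refl4, a * b ≠ b * a →
    ∃ p ∈ [0, 1, 11, 111], run4 14 p [a, b] ∈ reps2 := by decide +kernel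
theorem chk_3 : chk4 (fun l => decide (l ∈ reps3)) (cases4 reps2) paths2 = true := by
  decide +kernel
theorem chk_4 : chk4 (fun l => decide (l ∈ reps4)) (cases4 reps3) paths3 = true := by
  decide +kernel
theorem chk_5 : chk4 tgt5 (cases4 reps4) paths4 = true := by
  decide +kernel
theorem uniq2 : ∀ l ∈ reps2, ∀ l' ∈ reps2, l.prod = l'.prod → n14 l = n14 l' → l = l' := by
  decide +kernel
theorem uniq3 : ∀ l ∈ reps3, ∀ l' ∈ reps3, l.prod = l'.prod → n14 l = n14 l' → l = l' := by
  decide +kernel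
theorem uniq4 : ∀ l ∈ reps4, ∀ l' ∈ reps4, l.prod = l'.prod → n14 l = n14 l' → l = l' := by
  decide +kernel

/-! ### Normal forms -/

theorem Good4.conj {a b : M4} {l : List M4} (h : Good4 (a :: b :: l)) :
    ∀ x ∈ b :: (b⁻¹ * a * b) :: l, x ∈ refl4 := by
  intro x hx
  simp only [List.mem_cons] at hx
  rcases hx with rfl | rfl | hx
  · exact h.1 _ (by simp)
  · exact (refl_conj _ _).2 (h.1 _ (by simp))
  · exact h.1 _ (by simp [hx])

theorem Gen4.mono {l l' : List M4} (h : Gen4 l) (hs : ∀ x ∈ l, x ∈ l') : Gen4 l' := by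
  obtain ⟨x, hx, y, hy, hxy⟩ := h
  exact ⟨x, hs x hx, y, hs y hy, hxy⟩

theorem good_cons {x : M4} {l : List M4} (hx : x ∈ refl4) (h : Good4 l) : Good4 (x :: l) := by
  refine ⟨?_, h.2.mono (fun y hy => List.mem_cons_of_mem _ hy)⟩
  intro y hy
  rcases List.mem_cons.1 hy with rfl | hy
  · exact hx
  · exact h.1 y hy

theorem peel {x : M4} {l : List M4} (h : Good4 (x :: l)) (hl : 2 ≤ l.length) :
    ∃ x' ∈ refl4, ∃ l', LE4 (x :: l) (x' :: l') ∧ Good4 l' := by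
  by_cases hg : Gen4 l
  · exact ⟨x, h.1 x (by simp), l, .rfl' _, fun y hy => h.1 y (by simp [hy]), hg⟩
  · match l, hl with
    | y :: z :: l2, _ =>
      have hc : ∀ a ∈ y :: z :: l2, ∀ b ∈ y :: z :: l2, a * b = b * a := by
        intro a ha b hb
        by_contra hab
        exact hg ⟨a, ha, b, hb, hab⟩
      have hx := h.1 x (by simp)
      have hy := h.1 y (by simp)
      have hz := h.1 z (by simp)
      have hxz : x * z ≠ z * x := by
        intro hxz
        have key : ∀ w ∈ y :: z :: l2, x * w = w * x := fun w hw =>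
          refl_comm_trans x hx z hz w (h.1 w (List.mem_cons_of_mem _ hw)) hxz
            (hc z (by simp) w hw)
        obtain ⟨a, ha, b, hb, hab⟩ := h.2
        rcases List.mem_cons.1 ha with rfl | ha1
        · rcases List.mem_cons.1 hb with rfl | hb
          · exact hab rfl
          · exact hab (key b hb)
        · rcases List.mem_cons.1 hb with rfl | hb
          · exact hab (key a ha1).symm
          · exact hab (hc a ha1 b hb)
      refine ⟨y, hy, (y⁻¹ * x * y) :: z :: l2, .swap _ _ _, ?_, ?_⟩
      · intro w hw
        exact h.conj w (List.mem_cons_of_mem _ hw)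
      · exact ⟨y⁻¹ * x * y, by simp, z, by simp,
          refl_shift x hx y hy z hz (hc y (by simp) z (by simp)) hxz⟩

theorem mem_cases {x : M4} {r : List M4} {R : List (List M4)} (hx : x ∈ refl4) (hr : r ∈ R) :
    x :: r ∈ cases4 R := by
  simp only [cases4, List.mem_flatMap, List.mem_map]
  exact ⟨x, hx, r, hr, rfl⟩

theorem to_reps2 (l : List M4) (h : Good4 l) (hl : l.length = 2) : ∃ r ∈ reps2, LE4 l r := by
  match l, hl with
  | [a, b], _ =>
    have ha := h.1 a (by simp)
    have hb := h.1 b (by simp)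
    have hab : a * b ≠ b * a := by
      intro hab
      obtain ⟨x, hx, y, hy, hxy⟩ := h.2
      simp only [List.mem_cons, List.not_mem_nil, or_false] at hx hy
      rcases hx with rfl | rfl <;> rcases hy with rfl | rfl <;> simp_all
    obtain ⟨p, -, hp⟩ := chk_2 a ha b hb hab
    exact ⟨_, hp, run4_le _ _ _⟩

theorem step_reps {m : ℕ} {R : List (List M4)} {tgt : List M4 → Bool} {ps : List ℕ} (hm : 2 ≤ m)
    (hR : ∀ l : List M4, Good4 l → l.length = m → ∃ r ∈ R, LE4 l r)
    (hc : chk4 tgt (cases4 R) ps = true) (l : List M4) (h : Good4 l) (hl : l.length = m + 1) :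
    ∃ r, tgt r = true ∧ LE4 l r := by
  match l, hl with
  | x :: l, hl =>
    simp only [List.length_cons] at hl
    obtain ⟨x', hx', l', hle, hg⟩ := peel h (by omega)
    have hlen := hle.length
    simp only [List.length_cons] at hlen
    obtain ⟨r, hr, hr'⟩ := hR l' hg (by omega)
    obtain ⟨r', h1, h2⟩ := chk4_spec tgt _ _ hc _ (mem_cases hx' hr)
    exact ⟨r', h2, hle.trans' ((LE4.cons' x' hr').trans' h1)⟩

theorem to_reps3 (l : List M4) (h : Good4 l) (hl : l.length = 3) : ∃ r ∈ reps3, LE4 l r := by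
  obtain ⟨r, h1, h2⟩ := step_reps (le_refl 2) to_reps2 chk_3 l h hl
  exact ⟨r, of_decide_eq_true h1, h2⟩

theorem to_reps4 (l : List M4) (h : Good4 l) (hl : l.length = 4) : ∃ r ∈ reps4, LE4 l r := by
  obtain ⟨r, h1, h2⟩ := step_reps (by norm_num) to_reps3 chk_4 l h hl
  exact ⟨r, of_decide_eq_true h1, h2⟩

/-- Every good list of length `k` can be moved to start with `s4` (or `s4⁻¹`). -/
def HeadProp (k : ℕ) : Prop := ∀ l : List M4, Good4 l → l.length = k →
  ∃ t, LE4 l ((if n14 l = 0 then s4⁻¹ else s4) :: t) ∧ Good4 t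

def UniqProp (k : ℕ) : Prop := ∀ l l' : List M4, Good4 l → Good4 l' → l.length = k →
  l'.length = k → l.prod = l'.prod → n14 l = n14 l' → LE4 l l'

theorem head5 : HeadProp 5 := by
  intro l h hl
  obtain ⟨r, h1, h2⟩ := step_reps (by norm_num) to_reps4 chk_5 l h hl
  match r, h1 with
  | a :: t, h1 =>
    simp only [tgt5, Bool.and_eq_true, decide_eq_true_eq] at h1
    have := h2.n1
    rw [← this] at h1
    refine ⟨t, ?_, h1.2⟩
    rw [← h1.1]
    exact h2

theorem s4_refl : s4 ∈ refl4 := by decide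
theorem s4i_refl : s4⁻¹ ∈ refl4 := by decide +kernel
theorem s4_cls : s4 ∈ cls4 := by decide
theorem s4i_cls : s4⁻¹ ∉ cls4 := by decide +kernel

theorem n14_cons (x : M4) (l : List M4) : n14 (x :: l) = n14 l + if x ∈ cls4 then 1 else 0 := by
  simp [n14, List.countP_cons]

theorem head_succ {k : ℕ} (hk : 5 ≤ k) (H : HeadProp k) : HeadProp (k + 1) := by
  intro l h hl
  match l, hl with
  | x :: l, hl =>
    simp only [List.length_cons] at hl
    obtain ⟨x', hx', l', hle, hg⟩ := peel h (by omega)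
    have hlen := hle.length
    simp only [List.length_cons] at hlen
    rw [hle.n1]
    obtain ⟨t, ht, htg⟩ := H l' hg (by omega)
    have hn := ht.n1
    have hlt := ht.length
    simp only [List.length_cons] at hlt
    by_cases h0 : n14 l' = 0
    · rw [if_pos h0] at ht
      have hsw := (LE4.cons' x' ht).trans' (.swap x' s4⁻¹ t)
      have hg2 : Good4 ((s4⁻¹⁻¹ * x' * s4⁻¹) :: t) := good_cons ((refl_conj _ _).2 hx') htg
      have hns := hsw.n1
      rw [n14_cons s4⁻¹, if_neg s4i_cls] at hns
      by_cases h1 : n14 (x' :: l') = 0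
      · rw [if_pos h1]
        exact ⟨_, hle.trans' hsw, hg2⟩
      · rw [if_neg h1]
        obtain ⟨t2, ht2, htg2⟩ := H _ hg2 (by simp only [List.length_cons]; omega)
        rw [if_neg (by omega)] at ht2
        have e := LE4.swap s4⁻¹ s4 t2
        have e2 : s4⁻¹ * s4⁻¹ * s4 = s4⁻¹ := by group
        rw [e2] at e
        exact ⟨s4⁻¹ :: t2, hle.trans' (hsw.trans' ((LE4.cons' _ ht2).trans' e)),
          good_cons s4i_refl htg2⟩
    · rw [if_neg h0] at ht
      have hsw := (LE4.cons' x' ht).trans' (.swap x' s4 t)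
      have h1 : n14 (x' :: l') ≠ 0 := by rw [n14_cons]; omega
      rw [if_neg h1]
      exact ⟨_, hle.trans' hsw, good_cons ((refl_conj _ _).2 hx') htg⟩

theorem head_all {k : ℕ} (hk : 5 ≤ k) : HeadProp k := by
  induction k, hk using Nat.le_induction with
  | base => exact head5
  | succ n hn ih => exact head_succ hn ih

theorem uniq_of_reps {k : ℕ} {R : List (List M4)}
    (hR : ∀ l : List M4, Good4 l → l.length = k → ∃ r ∈ R, LE4 l r)
    (hu : ∀ l ∈ R, ∀ l' ∈ R, l.prod = l'.prod → n14 l = n14 l' → l = l') : UniqProp k := by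
  intro l l' h h' hl hl' hp hn
  obtain ⟨r, hr, e⟩ := hR l h hl
  obtain ⟨r', hr', e'⟩ := hR l' h' hl'
  have : r = r' := hu r hr r' hr' (by rw [← e.prod, ← e'.prod, hp]) (by rw [← e.n1, ← e'.n1, hn])
  subst this
  exact e.trans' e'.symm'

theorem uniq_succ {k : ℕ} (U : UniqProp k) (H : HeadProp (k + 1)) : UniqProp (k + 1) := by
  intro l l' h h' hl hl' hp hn
  obtain ⟨t, e, g⟩ := H l h hl
  obtain ⟨t', e', g'⟩ := H l' h' hl'
  rw [← hn] at e'
  have a1 := e.prod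
  have a2 := e'.prod
  have b1 := e.n1
  have b2 := e'.n1
  have c1 := e.length
  have c2 := e'.length
  simp only [List.prod_cons, List.length_cons, n14_cons] at a1 a2 b1 b2 c1 c2
  have : LE4 t t' := U t t' g g' (by omega) (by omega)
    (mul_left_cancel (a1.symm.trans (hp.trans a2))) (by omega)
  exact e.trans' ((LE4.cons' _ this).trans' e'.symm')

theorem uniq_all {k : ℕ} (hk : 2 ≤ k) : UniqProp k := by
  rcases (by omega : k = 2 ∨ k = 3 ∨ 4 ≤ k) with rfl | rfl | hk
  · exact uniq_of_reps to_reps2 uniq2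
  · exact uniq_of_reps to_reps3 uniq3
  · induction k, hk using Nat.le_induction with
    | base => exact uniq_of_reps to_reps4 uniq4
    | succ n hn ih => exact uniq_succ (ih (by omega)) (head_all (by omega))

theorem prod_of_comm (x : M4) (hx : x ∈ refl4) (l : List M4) (h : ∀ y ∈ l, y = x ∨ y = x⁻¹) :
    l.prod = 1 ∨ l.prod = x ∨ l.prod = x⁻¹ := by
  obtain ⟨h1, h2, -, -⟩ := refl_cube x hx
  induction l with
  | nil => simp
  | cons y l ih =>
    rw [List.prod_cons]
    rcases h y (by simp) with rfl | rfl <;>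
    rcases ih (fun y hy => h y (by simp [hy])) with e | e | e <;> simp [e, h1, h2]

theorem gen_of_prod (l : List M4) (hr : ∀ x ∈ l, x ∈ refl4)
    (hp : l.prod * l.prod * l.prod ≠ 1) : Good4 l := by
  refine ⟨hr, ?_⟩
  by_contra hg
  match l with
  | [] => simp at hp
  | x :: l =>
    have hx := hr x (by simp)
    obtain ⟨-, -, h1, h2⟩ := refl_cube x hx
    have : ∀ y ∈ x :: l, y = x ∨ y = x⁻¹ := by
      intro y hy
      refine refl_comm x hx y (hr y hy) ?_
      by_contra hxy
      exact hg ⟨x, by simp, y, hy, hxy⟩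
    rcases prod_of_comm x hx _ this with e | e | e <;> rw [e] at hp
    · simp at hp
    · exact hp h1
    · exact hp h2

/-! ### The matrix representation of the model -/

theorem omega_sq : ω ^ 2 = -1 - ω := by
  have h : IsPrimitiveRoot ω 3 := by
    have := Complex.isPrimitiveRoot_exp 3 (by norm_num)
    simpa [ω] using this
  have h1 : ω ≠ 1 := h.ne_one (by norm_num)
  have h3 : ω ^ 3 = 1 := h.pow_eq_one
  have : (ω - 1) * (ω ^ 2 + ω + 1) = 0 := by linear_combination h3
  rcases mul_eq_zero.1 this with h | h
  · exact absurd (sub_eq_zero.1 h) h1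
  · linear_combination h

/-- integer coordinate `j` of three times the matrix of `g` -/
def co4 (g : M4) (j : ℕ) : ℤ := (((mMatTab >>> (3 * (8 * val4 g + j))) % 8 : ℕ) : ℤ) - 3

def ent4 (g : M4) (j : ℕ) : ℂ := ((co4 g (2 * j) : ℂ) + (co4 g (2 * j + 1) : ℂ) * ω) / 3

def fm4 (g : M4) : Matrix (Fin 2) (Fin 2) ℂ := !![ent4 g 0, ent4 g 1; ent4 g 2, ent4 g 3]

def chkEnt (g h k : M4) (a b c d e : ℕ) : Prop :=
  3 * co4 k (2 * e) = co4 g (2 * a) * co4 h (2 * b) - co4 g (2 * a + 1) * co4 h (2 * b + 1)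
    + (co4 g (2 * c) * co4 h (2 * d) - co4 g (2 * c + 1) * co4 h (2 * d + 1)) ∧
  3 * co4 k (2 * e + 1) = co4 g (2 * a) * co4 h (2 * b + 1) + co4 g (2 * a + 1) * co4 h (2 * b)
    - co4 g (2 * a + 1) * co4 h (2 * b + 1)
    + (co4 g (2 * c) * co4 h (2 * d + 1) + co4 g (2 * c + 1) * co4 h (2 * d)
    - co4 g (2 * c + 1) * co4 h (2 * d + 1))

instance (g h k : M4) (a b c d e : ℕ) : Decidable (chkEnt g h k a b c d e) := by
  unfold chkEnt; infer_instance

theorem chkEnt_all : ∀ g h : M4, chkEnt g h (g * h) 0 0 1 2 0 ∧ chkEnt g h (g * h) 0 1 1 3 1 ∧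
    chkEnt g h (g * h) 2 0 3 2 2 ∧ chkEnt g h (g * h) 2 1 3 3 3 := by decide +kernel

theorem ent_mul {g h k : M4} {a b c d e : ℕ} (H : chkEnt g h k a b c d e) :
    ent4 k e = ent4 g a * ent4 h b + ent4 g c * ent4 h d := by
  obtain ⟨h1, h2⟩ := H
  have h1' := congrArg (Int.cast : ℤ → ℂ) h1
  have h2' := congrArg (Int.cast : ℤ → ℂ) h2
  push_cast at h1' h2'
  unfold ent4
  have := omega_sq
  linear_combination h1' / 9 + h2' / 9 * ω - ((co4 g (2 * a + 1) : ℂ) * co4 h (2 * b + 1) +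
    (co4 g (2 * c + 1) : ℂ) * co4 h (2 * d + 1)) / 9 * this

theorem fm4_mul (g h : M4) : fm4 (g * h) = fm4 g * fm4 h := by
  obtain ⟨h1, h2, h3, h4⟩ := chkEnt_all g h
  unfold fm4
  rw [Matrix.mul_fin_two, ent_mul h1, ent_mul h2, ent_mul h3, ent_mul h4]

theorem ent_eq {g : M4} {j : ℕ} (a b : ℤ) (h : co4 g (2 * j) = a ∧ co4 g (2 * j + 1) = b) :
    ent4 g j = ((a : ℂ) + (b : ℂ) * ω) / 3 := by
  unfold ent4; rw [h.1, h.2]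

theorem fm4_one : fm4 1 = 1 := by
  unfold fm4
  rw [ent_eq (j := 0) 3 0 (by decide +kernel), ent_eq (j := 1) 0 0 (by decide +kernel),
    ent_eq (j := 2) 0 0 (by decide +kernel), ent_eq (j := 3) 3 0 (by decide +kernel)]
  rw [Matrix.one_fin_two]
  norm_num

theorem fm4_z : fm4 z4 = -1 := by
  unfold fm4
  rw [ent_eq (j := 0) (-3) 0 (by decide +kernel), ent_eq (j := 1) 0 0 (by decide +kernel),
    ent_eq (j := 2) 0 0 (by decide +kernel), ent_eq (j := 3) (-3) 0 (by decide +kernel)]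
  rw [Matrix.one_fin_two]
  norm_num

theorem fm4_a : fm4 s4 = AMat := by
  unfold fm4 AMat
  rw [ent_eq (j := 0) 3 0 (by decide +kernel), ent_eq (j := 1) 0 0 (by decide +kernel),
    ent_eq (j := 2) 0 0 (by decide +kernel), ent_eq (j := 3) 0 3 (by decide +kernel)]
  norm_num

theorem fm4_b : fm4 b4 = BMat := by
  unfold fm4 BMat
  rw [ent_eq (j := 0) 1 2 (by decide +kernel), ent_eq (j := 1) (-3) (-3) (by decide +kernel),
    ent_eq (j := 2) 2 2 (by decide +kernel), ent_eq (j := 3) 2 1 (by decide +kernel), omega_sq]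
  push_cast
  ext i j
  fin_cases i <;> fin_cases j <;> simp <;> ring

def fhom : M4 →* GL (Fin 2) ℂ :=
  MonoidHom.toHomUnits { toFun := fm4, map_one' := fm4_one, map_mul' := fm4_mul }

theorem fhom_val (g : M4) : ((fhom g : GL (Fin 2) ℂ) : Matrix (Fin 2) (Fin 2) ℂ) = fm4 g := rfl

theorem words4 : ∀ g : M4, ∃ i j k l : Fin 3, g = s4 ^ (i : ℕ) * b4 ^ (j : ℕ) * s4 ^ (k : ℕ)
    * b4 ^ (l : ℕ) := by decide +kernel

theorem fhom_mem (g : M4) : fhom g ∈ G4 := by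
  have ha : fhom s4 ∈ G4 := Subgroup.subset_closure (Or.inl fm4_a)
  have hb : fhom b4 ∈ G4 := Subgroup.subset_closure (Or.inr fm4_b)
  obtain ⟨i, j, k, l, rfl⟩ := words4 g
  simp only [map_mul, map_pow]
  exact mul_mem (mul_mem (mul_mem (pow_mem ha _) (pow_mem hb _)) (pow_mem ha _)) (pow_mem hb _)

theorem G4_le : G4 ≤ fhom.range := by
  unfold G4
  rw [Subgroup.closure_le]
  rintro g (hg | hg)
  · exact ⟨s4, Units.ext (fm4_a.trans hg.symm)⟩
  · exact ⟨b4, Units.ext (fm4_b.trans hg.symm)⟩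

def phi4 : M4 →* G4 := fhom.codRestrict G4 fhom_mem

theorem mat_phi (g : M4) : mat (phi4 g) = fm4 g := rfl

theorem phi_surj : Function.Surjective phi4 := by
  intro g
  obtain ⟨m, hm⟩ := G4_le g.2
  exact ⟨m, Subtype.ext hm⟩

theorem neg_one_ne : (-1 : Matrix (Fin 2) (Fin 2) ℂ) ≠ 1 := by
  intro h
  have := congrFun (congrFun h 0) 0
  norm_num at this

theorem phi_z : phi4 z4 ≠ 1 := by
  intro h
  have := congrArg mat h
  rw [mat_phi, fm4_z] at this
  exact neg_one_ne this

theorem phi_inj : Function.Injective phi4 := by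
  rw [injective_iff_map_eq_one]
  intro a ha
  rcases ker4 a with h | h | ⟨g, h⟩
  · exact h
  · subst h; exact absurd ha phi_z
  · have := congrArg phi4 h
    simp only [map_mul, ha, map_inv, mul_one, mul_inv_cancel] at this
    exact absurd this.symm phi_z

theorem eig_pow {N : Matrix (Fin 2) (Fin 2) ℂ} {ζ : ℂ} {v : Fin 2 → ℂ} (h : N *ᵥ v = ζ • v)  :
    (N * N) *ᵥ v = (ζ * ζ) • v ∧ (N * N * N) *ᵥ v = (ζ * ζ * ζ) • v := by
  have h2 : (N * N) *ᵥ v = (ζ * ζ) • v := by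
    rw [← Matrix.mulVec_mulVec, h, Matrix.mulVec_smul, h, smul_smul]
  refine ⟨h2, ?_⟩
  rw [← Matrix.mulVec_mulVec, h, Matrix.mulVec_smul, h2, smul_smul]
  congr 1; ring

theorem exists_eig {N : Matrix (Fin 2) (Fin 2) ℂ} {ζ : ℂ}
    (h : (N - ζ • (1 : Matrix (Fin 2) (Fin 2) ℂ)).det = 0) :
    ∃ v : Fin 2 → ℂ, v ≠ 0 ∧ N *ᵥ v = ζ • v := by
  obtain ⟨v, hv, h⟩ := Matrix.exists_mulVec_eq_zero_iff.2 h
  refine ⟨v, hv, ?_⟩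
  rw [Matrix.sub_mulVec, Matrix.smul_mulVec, Matrix.one_mulVec] at h
  exact sub_eq_zero.1 h

theorem refl_of_isReflection {m : M4} (h : IsReflection (phi4 m)) : m ∈ refl4 := by
  obtain ⟨h1, h2⟩ := h
  obtain ⟨v, hv, hN⟩ := exists_eig (ζ := 1) (N := mat (phi4 m)) (by rwa [one_smul])
  rw [mat_phi] at hN
  obtain ⟨e2, e3⟩ := eig_pow hN
  have key : ¬ ((-1 : Matrix (Fin 2) (Fin 2) ℂ) *ᵥ v = v) := by
    intro h
    rw [Matrix.neg_mulVec, Matrix.one_mulVec] at h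
    exact hv (self_eq_neg.1 h.symm)
  rcases not_refl m with h | h | h | h
  · exact h
  · subst h; simp at h1
  · rw [← fm4_mul, h, fm4_z] at e2
    exact absurd (by simpa using e2) key
  · rw [← fm4_mul, ← fm4_mul, h, fm4_z] at e3
    exact absurd (by simpa using e3) key

theorem cube_of_coxeter {m : M4} (h : IsCoxeter (phi4 m)) : m * m * m ≠ 1 := by
  intro h1
  obtain ⟨ζ, hz, hd⟩ := h
  obtain ⟨v, hv, hN⟩ := exists_eig hd
  rw [mat_phi] at hN
  have e3 := (eig_pow hN).2
  rw [← fm4_mul, ← fm4_mul, h1, fm4_one, Matrix.one_mulVec] at e3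
  have : (ζ * ζ * ζ - 1) • v = 0 := by rw [sub_smul, ← e3, one_smul, sub_self]
  rcases smul_eq_zero.1 this with h | h
  · have h3 : ζ ^ 3 = 1 := by linear_combination h
    have := hz.dvd_of_pow_eq_one 3 h3
    omega
  · exact hv h

/-! ### Tuples -/

theorem orbit_conj {G : Type*} [Group G] {k : ℕ} {t t' : Fin k → G}
    (h : SameHurwitzOrbit t t') : ∃ σ : Equiv.Perm (Fin k), ∀ i, IsConj (t i) (t' (σ i)) := by
  induction h with
  | rel t t' h =>
    obtain ⟨i, hi, h1, h2, h3⟩ := h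
    refine ⟨Equiv.swap ⟨i, Nat.lt_of_succ_lt hi⟩ ⟨i + 1, hi⟩, fun j => ?_⟩
    by_cases ha : j = ⟨i, Nat.lt_of_succ_lt hi⟩
    · subst ha
      rw [Equiv.swap_apply_left, h2]
      exact isConj_iff.2 ⟨(t ⟨i + 1, hi⟩)⁻¹, by simp⟩
    · by_cases hb : j = ⟨i + 1, hi⟩
      · subst hb
        rw [Equiv.swap_apply_right, h1]
      · rw [Equiv.swap_apply_of_ne_of_ne ha hb,
          h3 j (fun e => ha (Fin.ext e)) (fun e => hb (Fin.ext e))]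
  | refl t => exact ⟨1, fun i => IsConj.refl _⟩
  | symm t t' _ ih =>
    obtain ⟨σ, hσ⟩ := ih
    refine ⟨σ⁻¹, fun i => ?_⟩
    have := hσ (σ⁻¹ i)
    have e : σ (σ⁻¹ i) = i := σ.apply_symm_apply i
    rw [e] at this
    exact this.symm
  | trans a b c _ _ ih1 ih2 =>
    obtain ⟨σ, hσ⟩ := ih1
    obtain ⟨τ, hτ⟩ := ih2
    exact ⟨σ.trans τ, fun i => (hσ i).trans (hτ (σ i))⟩

theorem move_map {G H : Type*} [Group G] [Group H] (f : G →* H) {k : ℕ} {t t' : Fin k → G}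
    (h : SameHurwitzOrbit t t') : SameHurwitzOrbit (fun i => f (t i)) (fun i => f (t' i)) := by
  induction h with
  | rel t t' h =>
    obtain ⟨i, hi, h1, h2, h3⟩ := h
    exact .rel _ _ ⟨i, hi, by simp [h1], by simp [h2], fun j a b => by simp [h3 j a b]⟩
  | refl t => exact .refl _
  | symm t t' _ ih => exact .symm _ _ ih
  | trans a b c _ _ ih1 ih2 => exact .trans _ _ _ ih1 ih2

theorem move_cons {G : Type*} [Group G] (x : G) {k : ℕ} {t t' : Fin k → G}
    (h : SameHurwitzOrbit t t') :
    SameHurwitzOrbit (Fin.cons x t : Fin (k + 1) → G) (Fin.cons x t' : Fin (k + 1) → G) := by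
  induction h with
  | rel t t' h =>
    obtain ⟨i, hi, h1, h2, h3⟩ := h
    refine .rel _ _ ⟨i + 1, by omega, ?_, ?_, ?_⟩
    · exact h1
    · exact h2
    · intro j
      refine Fin.cases ?_ (fun j => ?_) j
      · intro _ _; rfl
      · intro a b
        simp only [Fin.cons_succ]
        simp only [Fin.val_succ] at a b
        exact h3 j (by omega) (by omega)
  | refl t => exact .refl _
  | symm t t' _ ih => exact .symm _ _ ih
  | trans a b c _ _ ih1 ih2 => exact .trans _ _ _ ih1 ih2

def tup4 {G : Type*} [Group G] (k : ℕ) (l : List G) : Fin k → G := fun i => l.getD i 1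

theorem tup4_cons {G : Type*} [Group G] (k : ℕ) (x : G) (l : List G) :
    tup4 (k + 1) (x :: l) = (Fin.cons x (tup4 k l) : Fin (k + 1) → G) := by
  funext j
  refine Fin.cases ?_ (fun j => ?_) j
  · rfl
  · simp [tup4]

theorem tup4_ofFn {G : Type*} [Group G] {k : ℕ} (t : Fin k → G) : tup4 k (List.ofFn t) = t := by
  funext i
  simp [tup4]

theorem LE4.orbit {G : Type*} [Group G] {l l' : List G} (h : LE4 l l') :
    ∀ k, l.length = k → SameHurwitzOrbit (tup4 k l) (tup4 k l') := by
  induction h with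
  | rfl' => intro k _; exact .refl _
  | symm' h ih => intro k hk; exact .symm _ _ (ih k (h.length.trans hk))
  | trans' h _ ih1 ih2 =>
    intro k hk
    exact .trans _ _ _ (ih1 k hk) (ih2 k (h.length.symm.trans hk))
  | swap a b l =>
    intro k hk
    simp only [List.length_cons] at hk
    subst hk
    refine .rel _ _ ⟨0, by omega, ?_, ?_, ?_⟩
    · simp [tup4]
    · simp [tup4]
    · rintro ⟨j, hj⟩ h0 h1
      obtain ⟨n, rfl⟩ : ∃ n, j = n + 2 := ⟨j - 2, by simp only at h0 h1; omega⟩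
      simp [tup4]
  | cons' x h ih =>
    intro k hk
    simp only [List.length_cons] at hk
    subst hk
    rw [tup4_cons, tup4_cons]
    exact move_cons x (ih _ rfl)

theorem n14_ofFn {k : ℕ} (u : Fin k → M4) :
    n14 (List.ofFn u) = ∑ i, if u i ∈ cls4 then 1 else 0 := by
  induction k with
  | zero => simp [n14]
  | succ k ih => rw [List.ofFn_succ, n14_cons, ih, Fin.sum_univ_succ, add_comm]

theorem g4_hurwitz_transitive_up_to_classes
    (c : G4) (hc : IsCoxeter c) (k : ℕ) (hk : 2 ≤ k)
    (t t' : Fin k → G4)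
    (ht : ∀ i, IsReflection (t i)) (ht' : ∀ i, IsReflection (t' i))
    (hp : (List.ofFn t).prod = c) (hp' : (List.ofFn t').prod = c) :
    SameHurwitzOrbit t t' ↔
      ∃ σ : Equiv.Perm (Fin k), ∀ i, IsConj (t i) (t' (σ i)) := by
  refine ⟨orbit_conj, ?_⟩
  rintro ⟨σ, hσ⟩
  choose u hu using fun i => phi_surj (t i)
  choose u' hu' using fun i => phi_surj (t' i)
  obtain rfl : (fun i => phi4 (u i)) = t := funext hu
  obtain rfl : (fun i => phi4 (u' i)) = t' := funext hu'
  have e1 : phi4 (List.ofFn u).prod = c := by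
    rw [← hp, map_list_prod, List.map_ofFn]; rfl
  have e2 : phi4 (List.ofFn u').prod = c := by
    rw [← hp', map_list_prod, List.map_ofFn]; rfl
  have hpe : (List.ofFn u).prod = (List.ofFn u').prod := phi_inj (e1.trans e2.symm)
  have g1 : Good4 (List.ofFn u) := by
    refine gen_of_prod _ ?_ (cube_of_coxeter (by rwa [e1]))
    intro x hx
    obtain ⟨i, rfl⟩ := (List.mem_ofFn' _ _).1 hx
    exact refl_of_isReflection (ht i)
  have g2 : Good4 (List.ofFn u') := by
    refine gen_of_prod _ ?_ (cube_of_coxeter (by rwa [e2]))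
    intro x hx
    obtain ⟨i, rfl⟩ := (List.mem_ofFn' _ _).1 hx
    exact refl_of_isReflection (ht' i)
  have hcl : ∀ i, u i ∈ cls4 ↔ u' (σ i) ∈ cls4 := by
    intro i
    obtain ⟨g, hg⟩ := isConj_iff.1 (hσ i)
    obtain ⟨m, rfl⟩ := phi_surj g
    rw [← map_inv, ← map_mul, ← map_mul] at hg
    have := phi_inj hg
    rw [← this]
    have h2 := cls_conj (u i) m⁻¹
    rw [inv_inv] at h2
    exact h2.symm
  have hn : n14 (List.ofFn u) = n14 (List.ofFn u') := by
    rw [n14_ofFn, n14_ofFn]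
    rw [← Equiv.sum_comp σ (fun i => if u' i ∈ cls4 then 1 else 0)]
    simp only [hcl]
  have := (uniq_all hk _ _ g1 g2 (by simp) (by simp) hpe hn).orbit k (by simp)
  rw [tup4_ofFn, tup4_ofFn] at this
  exact move_map phi4 this
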